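/- arXiv:math/0609287 — 5 statements merged into one kernel-verified Lean document; each statement's English description precedes it below -/
import Mathlib

section
/- Let ψ : Ω[B₁⁄R] ⊗[B₁] B₂ → Ω[B₂⁄R] be the unique B₂-linear map satisfying ψ(d b ⊗ 1) = d(φ(b)) for all b ∈ B₁, and suppose there exists a connection ∇ in φ. Then the unique B₂-linear map i_∇ : Ω[B₂⁄R] → Ω[B₁⁄R] ⊗[B₁] B₂ satisfying i_∇ ∘ d = ∇ is a left inverse of ψ (i.e. i_∇ ∘ ψ = id). In particular ψ is injective, so Ω[B₁⁄R] ⊗[B₁] B₂ is isomorphic as a B₂-module to its image ψ(Ω[B₁⁄R] ⊗[B₁] B₂) ⊆ Ω[B₂⁄R]. -/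
open TensorProduct

/-- The ring homomorphism `End R N →+* End R (M ⊗[R] N)`, `f ↦ id ⊗ f`. -/
noncomputable def lTensorEndHom (R M N : Type*) [CommSemiring R] [AddCommMonoid M]
    [AddCommMonoid N] [Module R M] [Module R N] :
    Module.End R N →+* Module.End R (M ⊗[R] N) where
  toFun f := LinearMap.lTensor M f
  map_one' := LinearMap.lTensor_id M N
  map_mul' f g := LinearMap.lTensor_comp M f g
  map_zero' := LinearMap.lTensor_zero M
  map_add' f g := LinearMap.lTensor_add M f g

/-- `M ⊗[R] N` is a module over `S`, with `S` acting through the right factor `N`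
(for us: `Ω[B₁⁄R] ⊗[B₁] B₂` is a `B₂`-module via multiplication on the right factor). -/
noncomputable instance (priority := 100) TensorProduct.rightFactorModule
    {R M N S : Type*} [CommSemiring R] [AddCommMonoid M] [AddCommMonoid N]
    [Module R M] [Module R N] [Semiring S] [Module S N] [SMulCommClass S R N] :
    Module S (M ⊗[R] N) :=
  Module.compHom _ ((lTensorEndHom R M N).comp (Module.toModuleEnd R N))

/-- Let `ψ : Ω[B₁⁄R] ⊗[B₁] B₂ → Ω[B₂⁄R]` be the unique `B₂`-linear map
with `ψ (d b ⊗ 1) = d (φ b)` for all `b ∈ B₁` (`φ = algebraMap B₁ B₂`), and suppose there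
is a connection `∇` in `φ`, i.e. an `R`-derivation `nab : B₂ → Ω[B₁⁄R] ⊗[B₁] B₂` with
`nab (φ b) = d b ⊗ 1`.  Then the unique `B₂`-linear map `i_nab : Ω[B₂⁄R] → Ω[B₁⁄R] ⊗[B₁] B₂`
with `i_nab ∘ d = nab` is a left inverse of `ψ`; in particular `ψ` is injective, and
`Ω[B₁⁄R] ⊗[B₁] B₂` is `B₂`-isomorphic to the image of `ψ` in `Ω[B₂⁄R]`. -/
theorem statement1 (R B₁ B₂ : Type*) [CommRing R] [CommRing B₁] [CommRing B₂]
    [Algebra R B₁] [Algebra R B₂] [Algebra B₁ B₂] [IsScalarTower R B₁ B₂]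
    (ψ : (KaehlerDifferential R B₁ ⊗[B₁] B₂) →ₗ[B₂] KaehlerDifferential R B₂)
    (hψ : ∀ b : B₁, ψ (KaehlerDifferential.D R B₁ b ⊗ₜ[B₁] (1 : B₂)) =
      KaehlerDifferential.D R B₂ (algebraMap B₁ B₂ b))
    (nab : Derivation R B₂ (KaehlerDifferential R B₁ ⊗[B₁] B₂))
    (hnab : ∀ b : B₁, nab (algebraMap B₁ B₂ b) =
      KaehlerDifferential.D R B₁ b ⊗ₜ[B₁] (1 : B₂))
    (inab : KaehlerDifferential R B₂ →ₗ[B₂] (KaehlerDifferential R B₁ ⊗[B₁] B₂))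
    (hinab : ∀ c : B₂, inab (KaehlerDifferential.D R B₂ c) = nab c) :
    inab.comp ψ = LinearMap.id ∧ Function.Injective ψ ∧
      Nonempty ((KaehlerDifferential R B₁ ⊗[B₁] B₂) ≃ₗ[B₂] LinearMap.range ψ) := by
  have key : ∀ (w : KaehlerDifferential R B₁) (b : B₂),
      inab (ψ (w ⊗ₜ[B₁] b)) = w ⊗ₜ[B₁] b := by
    intro w
    have hw : w ∈ Submodule.span B₁ (Set.range (KaehlerDifferential.D R B₁)) := by
      rw [KaehlerDifferential.span_range_derivation]; trivial
    induction hw using Submodule.span_induction with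
    | mem x hx =>
      obtain ⟨x, rfl⟩ := hx
      intro b
      have h : KaehlerDifferential.D R B₁ x ⊗ₜ[B₁] b =
          b • (KaehlerDifferential.D R B₁ x ⊗ₜ[B₁] (1 : B₂)) := by
        change _ = KaehlerDifferential.D R B₁ x ⊗ₜ[B₁] (b • (1 : B₂))
        rw [smul_eq_mul, mul_one]
      rw [h, map_smul, map_smul, hψ, hinab, hnab]
    | zero => intro b; rw [TensorProduct.zero_tmul, map_zero, map_zero]
    | add x y _ _ hx hy =>
      intro b
      rw [TensorProduct.add_tmul, map_add, map_add, hx, hy]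
    | smul a x _ hx =>
      intro b
      rw [TensorProduct.smul_tmul, hx]
  have hcomp : ∀ z, inab (ψ z) = z := by
    intro z
    induction z using TensorProduct.induction_on with
    | zero => rw [map_zero, map_zero]
    | tmul w b => exact key w b
    | add x y hx hy => rw [map_add, map_add, hx, hy]
  have hinj : Function.Injective ψ := Function.LeftInverse.injective hcomp
  exact ⟨LinearMap.ext hcomp, hinj, ⟨LinearEquiv.ofInjective ψ hinj⟩⟩
end

section
/- Let B₁, B₂, B₃ be commutative R-algebras, φ' : B₁ → B₂ and φ : B₂ → B₃ R-algebra homomorphisms, ∇' a connection in φ' and ∇ a connection in φ. Let id ⊗ φ : Ω[B₁⁄R] ⊗[B₁] B₂ → Ω[B₁⁄R] ⊗[B₁] B₃ be the map induced by φ (where B₂ is a B₁-module via φ' and B₃ is a B₁-module via φ ∘ φ'), and let ψ̄ : Ω[B₂⁄R] ⊗[B₂] B₃ → Ω[B₁⁄R] ⊗[B₁] B₃ be the unique B₃-linear map satisfying ψ̄(d b ⊗ 1) = (id ⊗ φ)(∇'(b)) for all b ∈ B₂. Then the composition □ := ψ̄ ∘ ∇ : B₃ → Ω[B₁⁄R]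 ⊗[B₁] B₃ is a connection in φ ∘ φ' : B₁ → B₃, i.e. □ is an R-derivation and □((φ ∘ φ')(b)) = d b ⊗ 1 for all b ∈ B₁. -/
open TensorProduct

/-- Let `φ' = algebraMap B₁ B₂`, `φ = algebraMap B₂ B₃` (so that
`φ ∘ φ' = algebraMap B₁ B₃`), let `nab'` be a connection in `φ'` and `nab` a connection
in `φ`.  Let `F = id ⊗ φ : Ω[B₁⁄R] ⊗[B₁] B₂ → Ω[B₁⁄R] ⊗[B₁] B₃` be the map induced by
`φ`, and let `ψbar : Ω[B₂⁄R] ⊗[B₂] B₃ → Ω[B₁⁄R] ⊗[B₁] B₃` be the unique `B₃`-linear map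
with `ψbar (d b ⊗ 1) = F (nab' b)` for `b ∈ B₂`.  Then `ψbar ∘ nab : B₃ → Ω[B₁⁄R] ⊗[B₁] B₃`
is a connection in `φ ∘ φ'`: it is an `R`-derivation and sends `(φ ∘ φ') b` to `d b ⊗ 1`. -/
theorem statement4 (R B₁ B₂ B₃ : Type*) [CommRing R]
    [CommRing B₁] [CommRing B₂] [CommRing B₃]
    [Algebra R B₁] [Algebra R B₂] [Algebra R B₃]
    [Algebra B₁ B₂] [Algebra B₂ B₃] [Algebra B₁ B₃]
    [IsScalarTower R B₁ B₂] [IsScalarTower R B₂ B₃] [IsScalarTower R B₁ B₃]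
    [IsScalarTower B₁ B₂ B₃]
    (nab' : Derivation R B₂ (KaehlerDifferential R B₁ ⊗[B₁] B₂))
    (hnab' : ∀ b : B₁, nab' (algebraMap B₁ B₂ b) =
      KaehlerDifferential.D R B₁ b ⊗ₜ[B₁] (1 : B₂))
    (nab : Derivation R B₃ (KaehlerDifferential R B₂ ⊗[B₂] B₃))
    (hnab : ∀ b : B₂, nab (algebraMap B₂ B₃ b) =
      KaehlerDifferential.D R B₂ b ⊗ₜ[B₂] (1 : B₃))
    (F : (KaehlerDifferential R B₁ ⊗[B₁] B₂) →+ (KaehlerDifferential R B₁ ⊗[B₁] B₃))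
    (hF : ∀ (ξ : KaehlerDifferential R B₁) (b : B₂),
      F (ξ ⊗ₜ[B₁] b) = ξ ⊗ₜ[B₁] (algebraMap B₂ B₃ b))
    (ψbar : (KaehlerDifferential R B₂ ⊗[B₂] B₃) →ₗ[B₃]
      (KaehlerDifferential R B₁ ⊗[B₁] B₃))
    (hψbar : ∀ b : B₂,
      ψbar (KaehlerDifferential.D R B₂ b ⊗ₜ[B₂] (1 : B₃)) = F (nab' b)) :
    ∃ sq : Derivation R B₃ (KaehlerDifferential R B₁ ⊗[B₁] B₃),
      (∀ c : B₃, sq c = ψbar (nab c)) ∧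
      (∀ b : B₁, sq (algebraMap B₁ B₃ b) =
        KaehlerDifferential.D R B₁ b ⊗ₜ[B₁] (1 : B₃)) := by
  have key : ∀ (r : R) (x : KaehlerDifferential R B₂ ⊗[B₂] B₃),
      r • x = (algebraMap R B₃ r) • x := by
    intro r x
    induction x with
    | zero => rw [smul_zero, smul_zero]
    | add x y hx hy => rw [smul_add, smul_add, hx, hy]
    | tmul ξ c =>
      change (r • ξ) ⊗ₜ[B₂] c = ξ ⊗ₜ[B₂] ((algebraMap R B₃ r) • c)
      rw [← algebraMap_smul B₂ r ξ, TensorProduct.smul_tmul, algebraMap_smul, algebraMap_smul]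
  have key' : ∀ (r : R) (x : KaehlerDifferential R B₁ ⊗[B₁] B₃),
      r • x = (algebraMap R B₃ r) • x := by
    intro r x
    induction x with
    | zero => rw [smul_zero, smul_zero]
    | add x y hx hy => rw [smul_add, smul_add, hx, hy]
    | tmul ξ c =>
      change (r • ξ) ⊗ₜ[B₁] c = ξ ⊗ₜ[B₁] ((algebraMap R B₃ r) • c)
      rw [← algebraMap_smul B₁ r ξ, TensorProduct.smul_tmul, algebraMap_smul, algebraMap_smul]
  let L : B₃ →ₗ[R] (KaehlerDifferential R B₁ ⊗[B₁] B₃) :=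
    { toFun := fun c => ψbar (nab c)
      map_add' := fun x y => by rw [map_add, map_add]
      map_smul' := fun r x => by
        rw [Derivation.map_smul, key, map_smul, RingHom.id_apply, key'] }
  refine ⟨Derivation.mk' L ?_, fun c => rfl, ?_⟩
  · intro a b
    change ψbar (nab (a * b)) = a • ψbar (nab b) + b • ψbar (nab a)
    rw [Derivation.leibniz, map_add, map_smul, map_smul]
  · intro b
    change ψbar (nab (algebraMap B₁ B₃ b)) = _
    rw [IsScalarTower.algebraMap_apply B₁ B₂ B₃, hnab, hψbar, hnab', hF, map_one]
end

section
/- The antisymmetric part of the generalized Christoffel symbols of τ is determined by the antisymmetric part ω of τ: for all indices α, μ, β and all x ∈ U, T^α_{μβ} := Γ^α_{μβ} − Γ^α_{βμ} = Σ_δ g^{αδ} (∂_μ ω_{βδ} + ∂_β ω_{δμ} + ∂_δ ω_{μβ}) (which equals 3 g^{αδ} ∂_{[μ} ω_{βδ]}, the totally antisymmetrized derivative of ω). -/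
open scoped BigOperators

/-- The partial derivative `∂_μ f` of `f : ℝⁿ → ℝ` in the `μ`-th coordinate direction. -/
noncomputable def pd {n : ℕ} (μ : Fin n) (f : (Fin n → ℝ) → ℝ) (x : Fin n → ℝ) : ℝ :=
  fderiv ℝ f x (Pi.single μ 1)

/-- The symmetric part `g_{μν} = (τ_{μν} + τ_{νμ})/2` of `τ`. -/
noncomputable def gPart {n : ℕ} (τ : (Fin n → ℝ) → Matrix (Fin n) (Fin n) ℝ)
    (x : Fin n → ℝ) : Matrix (Fin n) (Fin n) ℝ :=
  fun μ ν => (τ x μ ν + τ x ν μ) / 2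

/-- The antisymmetric part `ω_{μν} = (τ_{μν} - τ_{νμ})/2` of `τ`. -/
noncomputable def wPart {n : ℕ} (τ : (Fin n → ℝ) → Matrix (Fin n) (Fin n) ℝ)
    (x : Fin n → ℝ) : Matrix (Fin n) (Fin n) ℝ :=
  fun μ ν => (τ x μ ν - τ x ν μ) / 2

/-- The entries `g^{μν}` of the inverse matrix `g(x)⁻¹`. -/
noncomputable def gInv {n : ℕ} (τ : (Fin n → ℝ) → Matrix (Fin n) (Fin n) ℝ)
    (x : Fin n → ℝ) : Matrix (Fin n) (Fin n) ℝ :=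
  (gPart τ x)⁻¹

/-- The generalized Christoffel symbols
`Γ^α_{μβ} = (1/2) Σ_δ g^{αδ} (∂_μ τ_{βδ} + ∂_β τ_{δμ} − ∂_δ τ_{βμ})` of `τ`. -/
noncomputable def GammaT {n : ℕ} (τ : (Fin n → ℝ) → Matrix (Fin n) (Fin n) ℝ)
    (α μ β : Fin n) (x : Fin n → ℝ) : ℝ :=
  (1 / 2) * ∑ δ, gInv τ x α δ *
    (pd μ (fun y => τ y β δ) x + pd β (fun y => τ y δ μ) x - pd δ (fun y => τ y β μ) x)

/-- The classical Christoffel symbols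
`Γg^α_{μβ} = (1/2) Σ_δ g^{αδ} (∂_μ g_{βδ} + ∂_β g_{δμ} − ∂_δ g_{βμ})`
of the symmetric part `g` of `τ`. -/
noncomputable def GammaG {n : ℕ} (τ : (Fin n → ℝ) → Matrix (Fin n) (Fin n) ℝ)
    (α μ β : Fin n) (x : Fin n → ℝ) : ℝ :=
  (1 / 2) * ∑ δ, gInv τ x α δ *
    (pd μ (fun y => gPart τ y β δ) x + pd β (fun y => gPart τ y δ μ) x -
      pd δ (fun y => gPart τ y β μ) x)

/-- The antisymmetric part of the generalized Christoffel symbols of `τ`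
is determined by the antisymmetric part `ω` of `τ`:
`T^α_{μβ} = Γ^α_{μβ} − Γ^α_{βμ} = Σ_δ g^{αδ} (∂_μ ω_{βδ} + ∂_β ω_{δμ} + ∂_δ ω_{μβ})`
(which equals `3 g^{αδ} ∂_{[μ} ω_{βδ]}`). -/
theorem statement5 (n : ℕ) (hn : 1 ≤ n) (U : Set (Fin n → ℝ)) (hU : IsOpen U)
    (τ : (Fin n → ℝ) → Matrix (Fin n) (Fin n) ℝ)
    (hτ : ∀ μ ν : Fin n, ContDiffOn ℝ (⊤ : ℕ∞) (fun x => τ x μ ν) U)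
    (hg : ∀ x ∈ U, IsUnit (gPart τ x).det) :
    ∀ (α μ β : Fin n), ∀ x ∈ U,
      GammaT τ α μ β x - GammaT τ α β μ x =
        ∑ δ, gInv τ x α δ *
          (pd μ (fun y => wPart τ y β δ) x + pd β (fun y => wPart τ y δ μ) x +
            pd δ (fun y => wPart τ y μ β) x) := by
  intro α μ β x hx
  have hd : ∀ a b : Fin n, DifferentiableAt ℝ (fun y => τ y a b) x := fun a b =>
    ((hτ a b).contDiffAt (hU.mem_nhds hx)).differentiableAt (by simp)
  have key : ∀ c a b : Fin n, pd c (fun y => wPart τ y a b) x =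
      (pd c (fun y => τ y a b) x - pd c (fun y => τ y b a) x) / 2 := by
    intro c a b
    have h : HasFDerivAt (fun y => wPart τ y a b)
        ((2 : ℝ)⁻¹ • (fderiv ℝ (fun y => τ y a b) x - fderiv ℝ (fun y => τ y b a) x)) x := by
      have h1 := ((hd a b).hasFDerivAt.sub (hd b a).hasFDerivAt).const_smul (2 : ℝ)⁻¹
      refine h1.congr_of_eventuallyEq (Filter.Eventually.of_forall fun y => ?_)
      simp [wPart]
      ring
    unfold pd
    rw [h.fderiv]
    simp
    ring
  simp only [GammaT, key, Finset.mul_sum]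
  rw [← Finset.sum_sub_distrib]
  refine Finset.sum_congr rfl fun δ _ => ?_
  ring
end

section
/- The symmetric part g of τ is parallel with respect to the generalized Levi-Civita connection of τ: for all indices μ, α, β and all x ∈ U, ∂_μ g_{αβ} − Σ_δ Γ^δ_{μα} g_{δβ} − Σ_δ Γ^δ_{μβ} g_{αδ} = 0. Equivalently, the covariant derivative of τ with respect to Γ equals the covariant derivative of its antisymmetric part ω: ∂_μ τ_{αν} − Σ_β Γ^β_{μα} τ_{βν} − Σ_β Γ^β_{μν} τ_{αβ} = ∂_μ ω_{αν} − Σ_β Γ^β_{μα} ω_{βν} − Σ_β Γ^β_{μν} ω_{αβ} for all indices μ, α, ν. -/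
open scoped BigOperators

theorem pd_gPart_aux {n : ℕ} (τ : (Fin n → ℝ) → Matrix (Fin n) (Fin n) ℝ) (x : Fin n → ℝ)
    (hd : ∀ μ ν : Fin n, DifferentiableAt ℝ (fun x => τ x μ ν) x) (μ α β : Fin n) :
    pd μ (fun y => gPart τ y α β) x =
      (pd μ (fun y => τ y α β) x + pd μ (fun y => τ y β α) x) / 2 := by
  have h := (((hd α β).hasFDerivAt.add (hd β α).hasFDerivAt).const_mul (2⁻¹ : ℝ))
  have e : (fun y => gPart τ y α β) =
      fun y => (2⁻¹ : ℝ) * (((fun x => τ x α β) + (fun x => τ x β α)) y) := by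
    funext y; simp only [gPart, Pi.add_apply]; ring
  unfold pd
  rw [e, h.fderiv]
  simp only [FunLike.coe_smul, FunLike.coe_add, Pi.smul_apply, Pi.add_apply, smul_eq_mul]
  ring

theorem pd_wPart_aux {n : ℕ} (τ : (Fin n → ℝ) → Matrix (Fin n) (Fin n) ℝ) (x : Fin n → ℝ)
    (hd : ∀ μ ν : Fin n, DifferentiableAt ℝ (fun x => τ x μ ν) x) (μ α β : Fin n) :
    pd μ (fun y => wPart τ y α β) x =
      (pd μ (fun y => τ y α β) x - pd μ (fun y => τ y β α) x) / 2 := by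
  have h := (((hd α β).hasFDerivAt.sub (hd β α).hasFDerivAt).const_mul (2⁻¹ : ℝ))
  have e : (fun y => wPart τ y α β) =
      fun y => (2⁻¹ : ℝ) * (((fun x => τ x α β) - (fun x => τ x β α)) y) := by
    funext y; simp only [wPart, Pi.sub_apply]; ring
  unfold pd
  rw [e, h.fderiv]
  simp only [FunLike.coe_smul, FunLike.coe_sub, Pi.smul_apply, Pi.sub_apply, smul_eq_mul]
  ring

theorem gPart_symm_aux {n : ℕ} (τ : (Fin n → ℝ) → Matrix (Fin n) (Fin n) ℝ) (x : Fin n → ℝ)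
    (α β : Fin n) : gPart τ x α β = gPart τ x β α := by
  simp only [gPart]; ring

theorem lower_aux {n : ℕ} (τ : (Fin n → ℝ) → Matrix (Fin n) (Fin n) ℝ) (x : Fin n → ℝ)
    (hg : IsUnit (gPart τ x).det) (μ α β : Fin n) :
    ∑ δ, GammaT τ δ μ α x * gPart τ x δ β =
      (1 / 2) * (pd μ (fun y => τ y α β) x + pd α (fun y => τ y β μ) x
        - pd β (fun y => τ y α μ) x) := by
  set v : Fin n → ℝ := fun δ => pd μ (fun y => τ y α δ) x + pd α (fun y => τ y δ μ) x
        - pd δ (fun y => τ y α μ) x with hv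
  have h1 : (gPart τ x).mulVec ((gInv τ x).mulVec v) = v := by
    rw [Matrix.mulVec_mulVec, gInv, Matrix.mul_nonsing_inv _ hg, Matrix.one_mulVec]
  have h2 := congrFun h1 β
  change _ = (1 / 2) * v β
  rw [← h2]
  simp only [Matrix.mulVec, dotProduct]
  rw [Finset.mul_sum]
  refine Finset.sum_congr rfl fun δ _ => ?_
  rw [gPart_symm_aux τ x β δ]
  simp only [GammaT, hv]
  ring

/-- The symmetric part `g` of `τ` is parallel for the generalized
Levi-Civita connection of `τ`:
`∂_μ g_{αβ} − Σ_δ Γ^δ_{μα} g_{δβ} − Σ_δ Γ^δ_{μβ} g_{αδ} = 0`.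
Equivalently, the covariant derivative of `τ` with respect to `Γ` equals the covariant
derivative of its antisymmetric part `ω`. -/
theorem statement7 (n : ℕ) (hn : 1 ≤ n) (U : Set (Fin n → ℝ)) (hU : IsOpen U)
    (τ : (Fin n → ℝ) → Matrix (Fin n) (Fin n) ℝ)
    (hτ : ∀ μ ν : Fin n, ContDiffOn ℝ (⊤ : ℕ∞) (fun x => τ x μ ν) U)
    (hg : ∀ x ∈ U, IsUnit (gPart τ x).det) :
    (∀ (μ α β : Fin n), ∀ x ∈ U,
      pd μ (fun y => gPart τ y α β) x -
        (∑ δ, GammaT τ δ μ α x * gPart τ x δ β) -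
        (∑ δ, GammaT τ δ μ β x * gPart τ x α δ) = 0) ∧
    (∀ (μ α ν : Fin n), ∀ x ∈ U,
      pd μ (fun y => τ y α ν) x -
          (∑ β, GammaT τ β μ α x * τ x β ν) -
          (∑ β, GammaT τ β μ ν x * τ x α β) =
        pd μ (fun y => wPart τ y α ν) x -
          (∑ β, GammaT τ β μ α x * wPart τ x β ν) -
          (∑ β, GammaT τ β μ ν x * wPart τ x α β)) := by
  have hd : ∀ x ∈ U, ∀ μ ν : Fin n, DifferentiableAt ℝ (fun x => τ x μ ν) x := by
    intro x hx μ ν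
    exact ((hτ μ ν).contDiffAt (hU.mem_nhds hx)).differentiableAt (by simp)
  have key : ∀ (μ α β : Fin n), ∀ x ∈ U,
      pd μ (fun y => gPart τ y α β) x -
        (∑ δ, GammaT τ δ μ α x * gPart τ x δ β) -
        (∑ δ, GammaT τ δ μ β x * gPart τ x α δ) = 0 := by
    intro μ α β x hx
    have h2 : ∑ δ, GammaT τ δ μ β x * gPart τ x α δ =
        ∑ δ, GammaT τ δ μ β x * gPart τ x δ α :=
      Finset.sum_congr rfl fun δ _ => by rw [gPart_symm_aux τ x α δ]
    rw [h2, lower_aux τ x (hg x hx), lower_aux τ x (hg x hx), pd_gPart_aux τ x (hd x hx)]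
    ring
  refine ⟨key, ?_⟩
  intro μ α ν x hx
  have k := key μ α ν x hx
  have hτgw : ∀ a b, τ x a b = gPart τ x a b + wPart τ x a b := by
    intro a b; simp only [gPart, wPart]; ring
  have e1 : ∑ β, GammaT τ β μ α x * τ x β ν = ∑ β, GammaT τ β μ α x * gPart τ x β ν +
      ∑ β, GammaT τ β μ α x * wPart τ x β ν := by
    rw [← Finset.sum_add_distrib]
    exact Finset.sum_congr rfl fun β _ => by rw [hτgw β ν]; ring
  have e2 : ∑ β, GammaT τ β μ ν x * τ x α β = ∑ β, GammaT τ β μ ν x * gPart τ x α β +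
      ∑ β, GammaT τ β μ ν x * wPart τ x α β := by
    rw [← Finset.sum_add_distrib]
    exact Finset.sum_congr rfl fun β _ => by rw [hτgw α β]; ring
  have e3 := pd_gPart_aux τ x (hd x hx) μ α ν
  have e4 := pd_wPart_aux τ x (hd x hx) μ α ν
  rw [e1, e2]
  linarith
end

section
/- The covariant derivative of τ with respect to its generalized Levi-Civita connection differs from the g-covariant derivative of the antisymmetric part ω by an explicit torsion term: for all indices μ, α, ν and all x ∈ U, ∂_μ τ_{αν} − Σ_β Γ^β_{μα} τ_{βν} − Σ_β Γ^β_{μν} τ_{αβ} = (∂_μ ω_{αν} − Σ_β Γg^β_{μα} ω_{βν} − Σ_β Γg^β_{μν} ω_{αβ}) − (1/2) Σ_β (T^β_{μα} ω_{βν} + T^β_{μν} ω_{αβ}), where Γg^α_{μβ} := (1/2) Σ_δ g^{αδ} (∂_μ g_{βδ} + ∂_β g_{δμ} − ∂_δ g_{βμ}) are the Christoffel symbols of g and T^β_{μα} := Γ^β_{μα} − Γ^β_{αμ} is the torsion of τ. -/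
open scoped BigOperators

/-- The covariant derivative of `τ` with respect to its generalized
Levi-Civita connection differs from the `g`-covariant derivative of the antisymmetric
part `ω` by an explicit torsion term:
`∇_μ τ_{αν} = (∇g)_μ ω_{αν} − (1/2) Σ_β (T^β_{μα} ω_{βν} + T^β_{μν} ω_{αβ})`,
where `T^β_{μα} = Γ^β_{μα} − Γ^β_{αμ}` is the torsion of `τ`. -/
theorem statement8 (n : ℕ) (hn : 1 ≤ n) (U : Set (Fin n → ℝ)) (hU : IsOpen U)
    (τ : (Fin n → ℝ) → Matrix (Fin n) (Fin n) ℝ)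
    (hτ : ∀ μ ν : Fin n, ContDiffOn ℝ (⊤ : ℕ∞) (fun x => τ x μ ν) U)
    (hg : ∀ x ∈ U, IsUnit (gPart τ x).det) :
    ∀ (μ α ν : Fin n), ∀ x ∈ U,
      pd μ (fun y => τ y α ν) x -
          (∑ β, GammaT τ β μ α x * τ x β ν) -
          (∑ β, GammaT τ β μ ν x * τ x α β) =
        (pd μ (fun y => wPart τ y α ν) x -
            (∑ β, GammaG τ β μ α x * wPart τ x β ν) -
            (∑ β, GammaG τ β μ ν x * wPart τ x α β)) -
          (1 / 2) * ∑ β, ((GammaT τ β μ α x - GammaT τ β α μ x) * wPart τ x β ν +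
            (GammaT τ β μ ν x - GammaT τ β ν μ x) * wPart τ x α β) := by
  intro μ α ν x hx
  have hd : ∀ i j, DifferentiableAt ℝ (fun y => τ y i j) x := fun i j =>
    ((hτ i j).differentiableOn (by simp)).differentiableAt (hU.mem_nhds hx)
  have hpg : ∀ m i j, pd m (fun y => gPart τ y i j) x =
      (pd m (fun y => τ y i j) x + pd m (fun y => τ y j i) x) / 2 := by
    intro m i j
    have h := (((hd i j).hasFDerivAt.add (hd j i).hasFDerivAt).mul_const (1 / 2 : ℝ)).fderiv
    have e : (fun y => gPart τ y i j) =
        fun y => ((fun y => τ y i j) + (fun y => τ y j i)) y * (1 / 2 : ℝ) := by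
      funext y; simp only [gPart, Pi.add_apply]; ring
    unfold pd
    rw [e, h]
    simp only [smul_apply, add_apply, smul_eq_mul, ContinuousLinearMap.smul_apply,
      ContinuousLinearMap.add_apply]
    ring
  have hpw : ∀ m i j, pd m (fun y => wPart τ y i j) x =
      (pd m (fun y => τ y i j) x - pd m (fun y => τ y j i) x) / 2 := by
    intro m i j
    have h := (((hd i j).hasFDerivAt.sub (hd j i).hasFDerivAt).mul_const (1 / 2 : ℝ)).fderiv
    have e : (fun y => wPart τ y i j) =
        fun y => ((fun y => τ y i j) - (fun y => τ y j i)) y * (1 / 2 : ℝ) := by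
      funext y; simp only [wPart, Pi.sub_apply]; ring
    unfold pd
    rw [e, h]
    simp only [smul_apply, sub_apply, smul_eq_mul, ContinuousLinearMap.smul_apply,
      ContinuousLinearMap.sub_apply]
    ring
  have hG : ∀ b m i, GammaG τ b m i x = (GammaT τ b m i x + GammaT τ b i m x) / 2 := by
    intro b m i
    unfold GammaG GammaT
    rw [← mul_add, ← Finset.sum_add_distrib, mul_div_assoc, Finset.sum_div]
    congr 1
    refine Finset.sum_congr rfl fun d _ => ?_
    rw [hpg, hpg, hpg]
    ring
  have hsym : ∀ i j, gPart τ x i j = gPart τ x j i := by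
    intro i j; unfold gPart; ring
  have hinv : ∀ c d, ∑ b, gPart τ x c b * gInv τ x b d = if c = d then 1 else 0 := by
    intro c d
    have h := Matrix.mul_nonsing_inv (gPart τ x) (hg x hx)
    have h2 := congrFun (congrFun h c) d
    rw [Matrix.mul_apply, Matrix.one_apply] at h2
    exact h2
  have hlow : ∀ m i c, ∑ b, GammaT τ b m i x * gPart τ x c b = (1 / 2) *
      (pd m (fun y => τ y i c) x + pd i (fun y => τ y c m) x - pd c (fun y => τ y i m) x) := by
    intro m i c
    unfold GammaT
    have e : ∀ b, (1 / 2 * ∑ δ, gInv τ x b δ * (pd m (fun y => τ y i δ) x +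
        pd i (fun y => τ y δ m) x - pd δ (fun y => τ y i m) x)) * gPart τ x c b =
        ∑ δ, (gPart τ x c b * gInv τ x b δ) * (1 / 2 * (pd m (fun y => τ y i δ) x +
        pd i (fun y => τ y δ m) x - pd δ (fun y => τ y i m) x)) := by
      intro b
      rw [Finset.mul_sum, Finset.sum_mul]
      exact Finset.sum_congr rfl fun d _ => by ring
    rw [Finset.sum_congr rfl fun b _ => e b, Finset.sum_comm]
    simp_rw [← Finset.sum_mul, hinv]
    simp
  have hdec : ∀ i j, τ x i j = gPart τ x i j + wPart τ x i j := by
    intro i j; unfold gPart wPart; ring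
  have h1 : ∑ β, GammaT τ β μ α x * τ x β ν = ∑ β, GammaT τ β μ α x * gPart τ x ν β +
      ∑ β, GammaT τ β μ α x * wPart τ x β ν := by
    rw [← Finset.sum_add_distrib]
    exact Finset.sum_congr rfl fun b _ => by rw [hdec b ν, hsym b ν]; ring
  have h2 : ∑ β, GammaT τ β μ ν x * τ x α β = ∑ β, GammaT τ β μ ν x * gPart τ x α β +
      ∑ β, GammaT τ β μ ν x * wPart τ x α β := by
    rw [← Finset.sum_add_distrib]
    exact Finset.sum_congr rfl fun b _ => by rw [hdec α b]; ring
  have h3 : ∑ β, GammaG τ β μ α x * wPart τ x β ν + ∑ β, GammaG τ β μ ν x * wPart τ x α β +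
      (1 / 2) * ∑ β, ((GammaT τ β μ α x - GammaT τ β α μ x) * wPart τ x β ν +
            (GammaT τ β μ ν x - GammaT τ β ν μ x) * wPart τ x α β) =
      ∑ β, GammaT τ β μ α x * wPart τ x β ν + ∑ β, GammaT τ β μ ν x * wPart τ x α β := by
    rw [Finset.mul_sum, ← Finset.sum_add_distrib, ← Finset.sum_add_distrib,
      ← Finset.sum_add_distrib]
    exact Finset.sum_congr rfl fun b _ => by rw [hG, hG]; ring
  rw [h1, h2, hlow, hlow, hpw]
  linarith
end
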